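/- Let 𝒫 be the Petersen graph, realized as the Kneser graph K(5,2): vertices are the 2-element subsets of a 5-element set, with two vertices adjacent if and only if the corresponding subsets are disjoint. Then there is a Marcello step from 𝒫 to the complete graph K_10 on its 10 vertices; i.e., ϖ(𝒫) = 1. -/

import Mathlib

open SimpleGraph

attribute [local instance] Classical.propDecidable

/-- The degree of a vertex. -/
noncomputable def mdeg {V : Type*} (G : SimpleGraph V) (v : V) : ℕ :=
  (G.neighborSet v).ncard

/-- `G'` is obtained from `G` by a Marcello step. -/
def MarcelloStep {V : Type*} [Fintype V] (G G' : SimpleGraph V) : Prop :=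
  G ≤ G' ∧ ∃ f : Sym2 V → V,
    (∀ e ∈ G'.edgeSet \ G.edgeSet, f e ∈ e) ∧
    (∀ v : V, (∃ e ∈ G'.edgeSet \ G.edgeSet, f e = v) →
        0 < mdeg G v ∧ mdeg G v < Fintype.card V - 1) ∧
    (∀ v : V, ((G'.edgeSet \ G.edgeSet) ∩ {e | f e = v}).ncard ≤ mdeg G v)

/-- There is a Marcello chain of length `k` from `G` to `H`. -/
def MarcelloChain {V : Type*} [Fintype V] (G H : SimpleGraph V) (k : ℕ) : Prop :=
  ∃ c : ℕ → SimpleGraph V, c 0 = G ∧ c k = H ∧ ∀ i < k, MarcelloStep (c i) (c (i + 1))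

/-- The Marcello number `ϖ(G)`. -/
noncomputable def marcelloNumber {V : Type*} [Fintype V] (G : SimpleGraph V) : ℕ :=
  sInf {k | MarcelloChain G (⊤ : SimpleGraph V) k}

/-- The sum of degrees over vertices `v` with `0 < deg v < n - 1`. -/
noncomputable def marcelloSum {V : Type*} [Fintype V] (G : SimpleGraph V) : ℕ :=
  ∑ v ∈ Finset.univ.filter
      (fun v => 0 < mdeg G v ∧ mdeg G v < Fintype.card V - 1), mdeg G v
/-- The Petersen graph, realized as the Kneser graph `K(5,2)`: vertices are `2`-element
subsets of a `5`-element set, adjacent iff disjoint. -/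
def petersenGraph : SimpleGraph {s : Finset (Fin 5) // s.card = 2} where
  Adj a b := Disjoint (a : Finset (Fin 5)) (b : Finset (Fin 5))
  symm := ⟨fun a b h => h.symm⟩
  loopless := ⟨fun a h => by
    have h' : Disjoint (a : Finset (Fin 5)) (a : Finset (Fin 5)) := h
    rw [disjoint_self] at h'
    have h2 := a.2
    rw [h'] at h2
    simp at h2⟩


section Helpers

/-- Orientation of the complement of the Petersen graph: the vertices `{a,x}`, `{a,y}` are
oriented from the first to the second when `y - x` is `1` or `2` modulo `5`. -/
def orientP (s t : Finset (Fin 5)) : Prop :=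
  ∃ x ∈ s \ t, ∃ y ∈ t \ s, y = x + 1 ∨ y = x + 2

instance (s t : Finset (Fin 5)) : Decidable (orientP s t) := by
  unfold orientP; infer_instance

set_option maxRecDepth 100000 in
theorem orientP_total : ∀ s ∈ (Finset.univ : Finset (Fin 5)).powersetCard 2,
    ∀ t ∈ (Finset.univ : Finset (Fin 5)).powersetCard 2,
    s ≠ t → ¬ Disjoint s t → orientP s t ∨ orientP t s := by
  decide +kernel

theorem orientP_count : ∀ s ∈ (Finset.univ : Finset (Fin 5)).powersetCard 2,
    (((Finset.univ : Finset (Fin 5)).powersetCard 2).filter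
      (fun t => orientP s t ∧ ¬ Disjoint s t)).card ≤ 3 := by
  decide +kernel

theorem disjoint_count : ∀ s ∈ (Finset.univ : Finset (Fin 5)).powersetCard 2,
    (((Finset.univ : Finset (Fin 5)).powersetCard 2).filter
      (fun t => Disjoint s t)).card = 3 := by
  decide +kernel

theorem ncard_sub (P : Finset (Fin 5) → Prop) [DecidablePred P] :
    {t : {s : Finset (Fin 5) // s.card = 2} | P t.1}.ncard =
      (((Finset.univ : Finset (Fin 5)).powersetCard 2).filter P).card := by
  rw [← Set.ncard_coe_finset, ← Set.ncard_image_of_injective _ Subtype.val_injective]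
  congr 1
  ext t
  simp [Finset.mem_powersetCard, and_comm]

theorem mem_pc (s : {s : Finset (Fin 5) // s.card = 2}) :
    s.1 ∈ (Finset.univ : Finset (Fin 5)).powersetCard 2 := by
  simp [Finset.mem_powersetCard, s.2]

theorem petersen_mdeg (v : {s : Finset (Fin 5) // s.card = 2}) : mdeg petersenGraph v = 3 := by
  rw [← disjoint_count v.1 (mem_pc v), ← ncard_sub]
  rfl

end Helpers

theorem petersen_card : Fintype.card {s : Finset (Fin 5) // s.card = 2} = 10 := by
  rw [← Nat.card_eq_fintype_card, Nat.subtype_card ((Finset.univ : Finset (Fin 5)).powersetCard 2)]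
  · simp [Finset.card_powersetCard]; decide
  · simp [Finset.mem_powersetCard]

theorem petersen_step :
    MarcelloStep petersenGraph (⊤ : SimpleGraph {s : Finset (Fin 5) // s.card = 2}) := by
  have key : ∀ e : Sym2 {s : Finset (Fin 5) // s.card = 2}, ∃ v,
      e ∈ (⊤ : SimpleGraph {s : Finset (Fin 5) // s.card = 2}).edgeSet \ petersenGraph.edgeSet →
      ∃ w, e = s(v, w) ∧ orientP v.1 w.1 ∧ ¬ Disjoint v.1 w.1 := by
    intro e
    induction e using Sym2.ind with
    | _ a b =>
      by_cases h : s(a, b) ∈ (⊤ : SimpleGraph {s : Finset (Fin 5) // s.card = 2}).edgeSet \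
          petersenGraph.edgeSet
      · obtain ⟨h1, h2⟩ := h
        have h1' : a ≠ b := by simpa using h1
        have h2' : ¬ Disjoint a.1 b.1 := h2
        rcases orientP_total a.1 (mem_pc a) b.1 (mem_pc b)
          (fun h => h1' (Subtype.ext h)) h2' with h | h
        · exact ⟨a, fun _ => ⟨b, rfl, h, h2'⟩⟩
        · exact ⟨b, fun _ => ⟨a, Sym2.eq_swap, h, fun h => h2' h.symm⟩⟩
      · exact ⟨a, fun h' => absurd h' h⟩
  choose f hf using key
  refine ⟨le_top, f, ?_, ?_, ?_⟩
  · intro e he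
    obtain ⟨w, hw, -⟩ := hf e he
    rw [Sym2.mem_iff_exists]
    exact ⟨w, hw⟩
  · intro v _
    rw [petersen_mdeg, petersen_card]
    omega
  · intro v
    rw [petersen_mdeg]
    have hsub : (((⊤ : SimpleGraph {s : Finset (Fin 5) // s.card = 2}).edgeSet \
        petersenGraph.edgeSet) ∩ {e | f e = v}) ⊆ (fun w => s(v, w)) ''
        {t : {s : Finset (Fin 5) // s.card = 2} | orientP v.1 t.1 ∧ ¬ Disjoint v.1 t.1} := by
      rintro e ⟨he, hv⟩
      obtain ⟨w, hw, h⟩ := hf e he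
      have hv' : f e = v := hv
      rw [hv'] at hw h
      exact ⟨w, h, hw.symm⟩
    refine (Set.ncard_le_ncard hsub (Set.toFinite _)).trans
      ((Set.ncard_image_le (Set.toFinite _)).trans ?_)
    rw [ncard_sub (fun t => orientP v.1 t ∧ ¬ Disjoint v.1 t)]
    convert orientP_count v.1 (mem_pc v)

/-- One Marcello step completes the Petersen graph: `ϖ(𝒫) = 1`. -/
theorem marcello_petersen :
    MarcelloStep petersenGraph (⊤ : SimpleGraph {s : Finset (Fin 5) // s.card = 2}) ∧
      marcelloNumber petersenGraph = 1 := by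
  refine ⟨petersen_step, ?_⟩
  have h1 : MarcelloChain petersenGraph
      (⊤ : SimpleGraph {s : Finset (Fin 5) // s.card = 2}) 1 := by
    refine ⟨fun i => if i = 0 then petersenGraph else ⊤, by simp, by simp, ?_⟩
    intro i hi
    obtain rfl : i = 0 := by omega
    simpa using petersen_step
  have h0 : ¬ MarcelloChain petersenGraph
      (⊤ : SimpleGraph {s : Finset (Fin 5) // s.card = 2}) 0 := by
    rintro ⟨c, hc, hc', -⟩
    rw [hc] at hc'
    have : petersenGraph.Adj ⟨{0, 1}, rfl⟩ ⟨{0, 2}, rfl⟩ := by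
      rw [hc', SimpleGraph.top_adj]
      intro h
      have h2 := congrArg (fun s => (1 : Fin 5) ∈ s.1) h
      simp at h2
    have hd : Disjoint ({0, 1} : Finset (Fin 5)) {0, 2} := this
    simp at hd
  unfold marcelloNumber
  apply le_antisymm (Nat.sInf_le h1)
  rw [Nat.one_le_iff_ne_zero]
  intro h
  have := Nat.sInf_mem (s := {k | MarcelloChain petersenGraph
    (⊤ : SimpleGraph {s : Finset (Fin 5) // s.card = 2}) k}) ⟨1, h1⟩
  rw [h] at this
  exact h0 this
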